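/- Let G be a simple graph on a vertex type V, w : V → V → ℝ≥0∞ an edge-weight function, and u, v, x vertices. Define the weighted shortest distance d_w as the infimum of weighted walk lengths. If every walk from u to v in G passes through x (i.e., x lies in the support of every walk p : G.Walk u v), then d_w(u,v) = d_w(u,x) + d_w(x,v). -/

import Mathlib

open scoped ENNReal

/-- The weighted length of a walk: the sum over its darts of the weight of the
dart's ordered pair of endpoints. -/
noncomputable def walkWeight {V : Type*} {G : SimpleGraph V} (w : V → V → ℝ≥0∞)
    {u v : V} (p : G.Walk u v) : ℝ≥0∞ :=
  (p.darts.map fun d => w d.fst d.snd).sum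

/-- The weighted shortest distance: the infimum of the weighted lengths of all
walks from `u` to `v` (equal to `∞` when there is no such walk). -/
noncomputable def wdist {V : Type*} (G : SimpleGraph V) (w : V → V → ℝ≥0∞)
    (u v : V) : ℝ≥0∞ :=
  ⨅ p : G.Walk u v, walkWeight w p

theorem wdist_cut_vertex {V : Type*} (G : SimpleGraph V) (w : V → V → ℝ≥0∞)
    (u v x : V) (hx : ∀ p : G.Walk u v, x ∈ p.support) :
    wdist G w u v = wdist G w u x + wdist G w x v := by
  classical
  have happ : ∀ (p : G.Walk u x) (q : G.Walk x v),
      walkWeight w (p.append q) = walkWeight w p + walkWeight w q := by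
    intro p q
    simp [walkWeight, SimpleGraph.Walk.darts_append]
  apply le_antisymm
  · unfold wdist
    rw [ENNReal.iInf_add]
    refine le_iInf fun p => ?_
    rw [ENNReal.add_iInf]
    refine le_iInf fun q => ?_
    rw [← happ]
    exact iInf_le _ _
  · refine le_iInf fun p => ?_
    rw [← p.take_spec (hx p), happ]
    exact add_le_add (iInf_le _ _) (iInf_le _ _)
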